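/- arXiv:1902.09128 — 2 statements merged into one kernel-verified Lean document; each statement's English description precedes it below -/
import Mathlib

section
/- Let a, b ∈ ℝⁿ with a ≤ b componentwise, let ξ̂ ∈ [a,b] (componentwise), let v ∈ ℝⁿ, t ∈ ℝ and λ ≥ 0. Then the supremum over ξ ∈ [a,b] of ⟨ξ,v⟩ − t − λ‖ξ − ξ̂‖_p equals the minimum, over all γ, η ∈ ℝⁿ with γ ≥ 0, η ≥ 0 and ‖v + γ − η‖_q ≤ λ, of ⟨v + γ − η, ξ̂⟩ − ⟨γ,a⟩ + ⟨η,b⟩ − t; moreover this minimum is attained. -/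
open MeasureTheory Filter Topology
open scoped ENNReal BigOperators

/-- The ℓp norm on ℝⁿ, for `p ∈ [1,∞]` (an extended nonnegative real). -/
noncomputable def lpNorm {n : ℕ} (p : ℝ≥0∞) (x : Fin n → ℝ) : ℝ :=
  if p = ∞ then ⨆ i, |x i| else (∑ i, |x i| ^ p.toReal) ^ (1 / p.toReal)

/-- The Euclidean inner product on ℝⁿ. -/
def ip {n : ℕ} (w x : Fin n → ℝ) : ℝ := ∑ i, w i * x i

/-!
Write `h_S` for the support function of `S`. With `B` the `ℓq` ball of radius `λ` one has
`h_B (ξ - ξ̂) = λ ‖ξ - ξ̂‖_p`, so the primal value is the max-min over `(ξ, w) ∈ [a, b] × B` of the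
biaffine function `⟨ξ, v - w⟩ + ⟨ξ̂, w⟩`. Sion's minimax theorem exchanges the two optimizations and
leaves the minimum over `w ∈ B` of `⟨ξ̂, w⟩ + h_{[a, b]} (v - w)`. Finally `h_{[a, b]} u` is the
least value of `⟨η, b⟩ - ⟨γ, a⟩` over the decompositions `u = η - γ` with `γ, η ≥ 0`, attained at
the positive and negative parts of `u`.
-/

open Set WithLp
open scoped Matrix

section Pairing

variable {E F : Type*} [AddCommGroup E] [Module ℝ E] [AddCommGroup F] [Module ℝ F]

/-- The support function `x ↦ sup_{y ∈ S} ⟨x, y⟩` of a set `S ⊆ F`, as a function on the space `E`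
paired with `F` by `P`. It is only meaningful where the supremum is finite: `sSup` is `0` on
unbounded and on empty sets of reals. -/
noncomputable def supportFun (P : E →ₗ[ℝ] F →ₗ[ℝ] ℝ) (S : Set F) (x : E) : ℝ :=
  sSup (P x '' S)

variable [TopologicalSpace F] {P : E →ₗ[ℝ] F →ₗ[ℝ] ℝ} {B : Set F}

lemma isGreatest_supportFun {x : E} (hPx : Continuous (P x)) (hB : IsCompact B)
    (hB₀ : B.Nonempty) : IsGreatest (P x '' B) (supportFun P B x) :=
  (hB.image hPx).isGreatest_sSup (hB₀.image _)

variable [TopologicalSpace E] {K : Set E}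

lemma sub_supportFun_le (hP : ∀ x, Continuous (P x)) (hP' : ∀ y, Continuous (P.flip y))
    (hK : IsCompact K) (hB : IsCompact B) (x₀ : E) (v : F) {x : E} (hx : x ∈ K) {y : F}
    (hy : y ∈ B) :
    P x v - supportFun P B (x - x₀) ≤ P x₀ y + supportFun P.flip K (v - y) := by
  have h₁ : P (x - x₀) y ≤ supportFun P B (x - x₀) :=
    (isGreatest_supportFun (hP _) hB ⟨y, hy⟩).2 ⟨y, hy, rfl⟩
  have h₂ : P x (v - y) ≤ supportFun P.flip K (v - y) :=
    (isGreatest_supportFun (hP' _) hK ⟨x, hx⟩).2 ⟨x, hx, rfl⟩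
  simp only [map_sub, LinearMap.sub_apply] at h₁ h₂
  linarith

variable [IsTopologicalAddGroup E] [ContinuousSMul ℝ E] [IsTopologicalAddGroup F]
  [ContinuousSMul ℝ F]

lemma exists_isSaddlePointOn_pairing (hP : ∀ x, Continuous (P x))
    (hP' : ∀ y, Continuous (P.flip y)) (hK : IsCompact K) (hKc : Convex ℝ K) (hK₀ : K.Nonempty)
    (hB : IsCompact B) (hBc : Convex ℝ B) (hB₀ : B.Nonempty) (x₀ : E) (v : F) :
    ∃ w ∈ B, ∃ ζ ∈ K, IsSaddlePointOn B K (fun y x ↦ P x (v - y) + P x₀ y) w ζ := by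
  refine Sion.exists_isSaddlePointOn hB₀ hBc hB (fun x _ ↦ ?_) (fun x _ ↦ ?_) hKc hK₀ hK
    (fun y _ ↦ ?_) (fun y _ ↦ ?_)
  · have := hP x
    have := hP x₀
    exact (by fun_prop : Continuous fun y ↦ P x (v - y) + P x₀ y).lowerSemicontinuous
      |>.lowerSemicontinuousOn _
  · have h := ((P (x₀ - x)).convexOn hBc).add_const (P x v)
    refine (h.congr fun y _ ↦ ?_).quasiconvexOn
    simp only [Pi.add_apply, map_sub, LinearMap.sub_apply]
    ring
  · exact ((hP' (v - y)).add_const (P x₀ y)).upperSemicontinuous.upperSemicontinuousOn _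
  · exact (((P.flip (v - y)).concaveOn hKc).add_const (P x₀ y)).quasiconcaveOn

theorem exists_sub_supportFun_eq (hP : ∀ x, Continuous (P x))
    (hP' : ∀ y, Continuous (P.flip y)) (hK : IsCompact K) (hKc : Convex ℝ K) (hK₀ : K.Nonempty)
    (hB : IsCompact B) (hBc : Convex ℝ B) (hB₀ : B.Nonempty) (x₀ : E) (v : F) :
    ∃ ζ ∈ K, ∃ w ∈ B,
      P ζ v - supportFun P B (ζ - x₀) = P x₀ w + supportFun P.flip K (v - w) := by
  obtain ⟨w, hw, ζ, hζ, hsaddle⟩ := exists_isSaddlePointOn_pairing hP hP' hK hKc hK₀ hB hBc hB₀ x₀ v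
  refine ⟨ζ, hζ, w, hw, (sub_supportFun_le hP hP' hK hB x₀ v hζ hw).antisymm ?_⟩
  obtain ⟨y, hy, hy_max⟩ := (isGreatest_supportFun (hP (ζ - x₀)) hB hB₀).1
  obtain ⟨x, hx, hx_max⟩ := (isGreatest_supportFun (hP' (v - w)) hK hK₀).1
  rw [← hy_max, ← hx_max]
  calc P x₀ w + P x (v - w) = P x (v - w) + P x₀ w := add_comm _ _
    _ ≤ P ζ (v - y) + P x₀ y := hsaddle y hy x hx
    _ = P ζ v - P (ζ - x₀) y := by
      simp only [map_sub, LinearMap.sub_apply]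
      ring

end Pairing

variable {ι : Type*} [Fintype ι]

section Box

variable {a b : ι → ℝ}

lemma dotProduct_sub_le_of_mem_Icc {γ η ξ : ι → ℝ} (hγ : 0 ≤ γ) (hη : 0 ≤ η)
    (hξ : ξ ∈ Icc a b) : ξ ⬝ᵥ (η - γ) ≤ η ⬝ᵥ b - γ ⬝ᵥ a := by
  rw [dotProduct_sub, dotProduct_comm ξ, dotProduct_comm ξ]
  exact sub_le_sub (dotProduct_le_dotProduct_of_nonneg_left hξ.2 hη)
    (dotProduct_le_dotProduct_of_nonneg_left hξ.1 hγ)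

lemma exists_mem_Icc_dotProduct_eq (hab : a ≤ b) (u : ι → ℝ) :
    ∃ ξ ∈ Icc a b, ξ ⬝ᵥ u = u⁺ ⬝ᵥ b - u⁻ ⬝ᵥ a := by
  refine ⟨fun i ↦ if 0 ≤ u i then b i else a i, ⟨fun i ↦ ?_, fun i ↦ ?_⟩, ?_⟩
  · dsimp only; split_ifs; exacts [hab i, le_rfl]
  · dsimp only; split_ifs; exacts [le_rfl, hab i]
  · simp only [dotProduct, ← Finset.sum_sub_distrib]
    refine Finset.sum_congr rfl fun i _ ↦ ?_
    rw [Pi.posPart_apply, Pi.negPart_apply]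
    split_ifs with hi
    · rw [posPart_of_nonneg hi, negPart_of_nonneg hi]; ring
    · rw [posPart_of_nonpos (not_le.1 hi).le, negPart_of_nonpos (not_le.1 hi).le]; ring

lemma supportFun_Icc (hab : a ≤ b) (u : ι → ℝ) :
    supportFun (dotProductBilin ℝ ℝ).flip (Icc a b) u = u⁺ ⬝ᵥ b - u⁻ ⬝ᵥ a := by
  refine IsGreatest.csSup_eq ⟨exists_mem_Icc_dotProduct_eq hab u, ?_⟩
  rintro _ ⟨ξ, hξ, rfl⟩
  have h := dotProduct_sub_le_of_mem_Icc (negPart_nonneg u) (posPart_nonneg u) hξ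
  rwa [posPart_sub_negPart] at h

lemma supportFun_Icc_le (hab : a ≤ b) {γ η : ι → ℝ} (hγ : 0 ≤ γ) (hη : 0 ≤ η) :
    supportFun (dotProductBilin ℝ ℝ).flip (Icc a b) (η - γ) ≤ η ⬝ᵥ b - γ ⬝ᵥ a := by
  obtain ⟨ξ, hξ, hξ_eq⟩ := exists_mem_Icc_dotProduct_eq hab (η - γ)
  rw [supportFun_Icc hab, ← hξ_eq]
  exact dotProduct_sub_le_of_mem_Icc hγ hη hξ

end Box

section LpBall

variable {p q : ℝ≥0∞}

/-- The closed `ℓq` ball of radius `r` centred at the origin, as a subset of `ι → ℝ` rather than of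
`PiLp q`, so that the dot product pairs it with boxes in `ι → ℝ`. -/
def lpBall (q : ℝ≥0∞) (r : ℝ) : Set (ι → ℝ) := {w | ‖toLp q w‖ ≤ r}

lemma lpBall_eq_image (q : ℝ≥0∞) [Fact (1 ≤ q)] (r : ℝ) :
    lpBall q r = PiLp.continuousLinearEquiv q ℝ (fun _ : ι ↦ ℝ) '' Metric.closedBall 0 r := by
  ext w
  simp [lpBall, (PiLp.continuousLinearEquiv q ℝ fun _ : ι ↦ ℝ).image_eq_preimage_symm]

lemma isCompact_lpBall (q : ℝ≥0∞) [Fact (1 ≤ q)] (r : ℝ) :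
    IsCompact (lpBall q r : Set (ι → ℝ)) := by
  rw [lpBall_eq_image]
  exact (isCompact_closedBall _ _).image (ContinuousLinearEquiv.continuous _)

lemma convex_lpBall (q : ℝ≥0∞) [Fact (1 ≤ q)] (r : ℝ) :
    Convex ℝ (lpBall q r : Set (ι → ℝ)) := by
  rw [lpBall_eq_image]
  exact (convex_closedBall _ _).linear_image
    (PiLp.continuousLinearEquiv q ℝ fun _ : ι ↦ ℝ).toLinearEquiv.toLinearMap

lemma dotProduct_le_norm_toLp_one_mul_norm (x w : ι → ℝ) : x ⬝ᵥ w ≤ ‖toLp 1 x‖ * ‖w‖ := by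
  rw [PiLp.norm_eq_of_L1, Finset.sum_mul]
  refine Finset.sum_le_sum fun i _ ↦ ?_
  calc x i * w i ≤ ‖x i * w i‖ := Real.le_norm_self _
    _ = ‖x i‖ * ‖w i‖ := norm_mul _ _
    _ ≤ ‖x i‖ * ‖w‖ := by gcongr; exact norm_le_pi_norm w i

lemma eq_one_top_or_eq_top_one_or_ne_top (p q : ℝ≥0∞) [p.HolderConjugate q] :
    p = 1 ∧ q = ∞ ∨ p = ∞ ∧ q = 1 ∨ p ≠ ∞ ∧ q ≠ ∞ := by
  have hp := ENNReal.HolderConjugate.eq_top_iff_eq_one p q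
  have hq := ENNReal.HolderConjugate.eq_top_iff_eq_one q p
  tauto

lemma norm_toLp_eq_sum (hp₀ : p ≠ 0) (hp : p ≠ ∞) (x : ι → ℝ) :
    ‖toLp p x‖ = (∑ i, |x i| ^ p.toReal) ^ (1 / p.toReal) :=
  PiLp.norm_eq_sum (ENNReal.toReal_pos hp₀ hp) _

lemma dotProduct_le_norm_toLp_mul_norm_toLp (p q : ℝ≥0∞) [p.HolderConjugate q] (x w : ι → ℝ) :
    x ⬝ᵥ w ≤ ‖toLp p x‖ * ‖toLp q w‖ := by
  rcases eq_one_top_or_eq_top_one_or_ne_top p q with ⟨rfl, rfl⟩ | ⟨rfl, rfl⟩ | ⟨hp, hq⟩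
  · rw [PiLp.norm_toLp]
    exact dotProduct_le_norm_toLp_one_mul_norm x w
  · rw [dotProduct_comm, mul_comm, PiLp.norm_toLp]
    exact dotProduct_le_norm_toLp_one_mul_norm w x
  · rw [norm_toLp_eq_sum (ENNReal.HolderConjugate.ne_zero p q) hp,
      norm_toLp_eq_sum (ENNReal.HolderConjugate.ne_zero q p) hq]
    exact Real.inner_le_Lp_mul_Lq _ _ _ (ENNReal.HolderConjugate.toReal_of_ne_top hp hq)

lemma abs_sign_le_one (r : ℝ) : |(SignType.sign r : ℝ)| ≤ 1 := by
  obtain h | h | h := lt_trichotomy r 0 <;> simp [h]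

lemma exists_mem_lpBall_top_dotProduct_eq (x : ι → ℝ) :
    ∃ w ∈ lpBall ∞ 1, x ⬝ᵥ w = ‖toLp 1 x‖ := by
  refine ⟨fun i ↦ SignType.sign (x i), ?_, ?_⟩
  · rw [lpBall, mem_ofPred_eq, PiLp.norm_toLp]
    exact (pi_norm_le_iff_of_nonneg zero_le_one).2 fun i ↦ abs_sign_le_one (x i)
  · rw [PiLp.norm_eq_of_L1]
    exact Finset.sum_congr rfl fun i _ ↦ self_mul_sign (x i)

lemma exists_mem_lpBall_one_dotProduct_eq (x : ι → ℝ) :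
    ∃ w ∈ lpBall 1 1, x ⬝ᵥ w = ‖toLp ∞ x‖ := by
  classical
  cases isEmpty_or_nonempty ι
  · exact ⟨0, by simp [lpBall], by simp [Subsingleton.elim x 0]⟩
  obtain ⟨i, hi⟩ : ∃ i, ‖x i‖ = ⨆ i, ‖x i‖ := exists_eq_ciSup_of_finite
  refine ⟨Pi.single i (SignType.sign (x i) : ℝ), ?_, ?_⟩
  · rw [lpBall, mem_ofPred_eq, ← PiLp.single, PiLp.norm_single]
    exact abs_sign_le_one (x i)
  · rw [PiLp.norm_eq_ciSup, dotProduct_single, self_mul_sign]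
    exact hi

lemma exists_mem_lpBall_dotProduct_eq_of_ne_top (p q : ℝ≥0∞) [p.HolderConjugate q] (hp : p ≠ ∞)
    (hq : q ≠ ∞) (x : ι → ℝ) : ∃ w ∈ lpBall q 1, x ⬝ᵥ w = ‖toLp p x‖ := by
  have hpq := ENNReal.HolderConjugate.toReal_of_ne_top hp hq
  obtain ⟨g, hg, hg_eq⟩ := (NNReal.isGreatest_Lp Finset.univ (fun i ↦ ‖x i‖₊) hpq).1
  refine ⟨fun i ↦ SignType.sign (x i) * g i, ?_, ?_⟩
  · rw [lpBall, mem_ofPred_eq, norm_toLp_eq_sum (ENNReal.HolderConjugate.ne_zero q p) hq]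
    refine Real.rpow_le_one (by positivity) ?_ (by positivity)
    calc ∑ i, |SignType.sign (x i) * (g i : ℝ)| ^ q.toReal ≤ ∑ i, (g i : ℝ) ^ q.toReal := by
          gcongr with i
          rw [abs_mul, NNReal.abs_eq]
          exact mul_le_of_le_one_left (g i).2 (abs_sign_le_one (x i))
      _ ≤ 1 := by exact_mod_cast hg
  · rw [norm_toLp_eq_sum (ENNReal.HolderConjugate.ne_zero p q) hp]
    calc ∑ i, x i * (SignType.sign (x i) * g i) = ∑ i, |x i| * g i := by
          simp only [← mul_assoc, self_mul_sign]
      _ = (∑ i, |x i| ^ p.toReal) ^ (1 / p.toReal) := by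
          simp only [← Real.norm_eq_abs, ← coe_nnnorm]
          exact_mod_cast hg_eq

lemma exists_mem_lpBall_dotProduct_eq (p q : ℝ≥0∞) [p.HolderConjugate q] (x : ι → ℝ) :
    ∃ w ∈ lpBall q 1, x ⬝ᵥ w = ‖toLp p x‖ := by
  rcases eq_one_top_or_eq_top_one_or_ne_top p q with ⟨rfl, rfl⟩ | ⟨rfl, rfl⟩ | ⟨hp, hq⟩
  · exact exists_mem_lpBall_top_dotProduct_eq x
  · exact exists_mem_lpBall_one_dotProduct_eq x
  · exact exists_mem_lpBall_dotProduct_eq_of_ne_top p q hp hq x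

lemma supportFun_lpBall (p q : ℝ≥0∞) [p.HolderConjugate q] {r : ℝ} (hr : 0 ≤ r) (x : ι → ℝ) :
    supportFun (dotProductBilin ℝ ℝ) (lpBall q r) x = r * ‖toLp p x‖ := by
  have : Fact (1 ≤ p) := ⟨ENNReal.HolderConjugate.one_le p q⟩
  have : Fact (1 ≤ q) := ⟨ENNReal.HolderConjugate.one_le q p⟩
  refine IsGreatest.csSup_eq ⟨?_, ?_⟩
  · obtain ⟨w, hw, hw_eq⟩ := exists_mem_lpBall_dotProduct_eq p q x
    refine ⟨r • w, ?_, ?_⟩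
    · rw [lpBall, mem_ofPred_eq, toLp_smul, norm_smul, Real.norm_of_nonneg hr]
      exact mul_le_of_le_one_right hr hw
    · rw [dotProductBilin_apply_apply, dotProduct_smul, hw_eq, smul_eq_mul]
  · rintro _ ⟨w, hw, rfl⟩
    calc x ⬝ᵥ w ≤ ‖toLp p x‖ * ‖toLp q w‖ := dotProduct_le_norm_toLp_mul_norm_toLp p q x w
      _ ≤ ‖toLp p x‖ * r := mul_le_mul_of_nonneg_left hw (norm_nonneg _)
      _ = r * ‖toLp p x‖ := mul_comm _ _

end LpBall

section Duality

variable {a b : ι → ℝ} {lam : ℝ}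

lemma continuous_dotProductBilin (x : ι → ℝ) : Continuous (dotProductBilin ℝ ℝ x) :=
  LinearMap.continuous_of_finiteDimensional _

lemma continuous_dotProductBilin_flip (y : ι → ℝ) : Continuous ((dotProductBilin ℝ ℝ).flip y) :=
  LinearMap.continuous_of_finiteDimensional _

lemma dotProduct_sub_mul_norm_le (p q : ℝ≥0∞) [p.HolderConjugate q] (ξhat v : ι → ℝ)
    {ξ γ η : ι → ℝ} (hξ : ξ ∈ Icc a b) (hγ : 0 ≤ γ) (hη : 0 ≤ η)
    (hw : ‖toLp q (v + γ - η)‖ ≤ lam) :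
    ξ ⬝ᵥ v - lam * ‖toLp p (ξ - ξhat)‖ ≤ (v + γ - η) ⬝ᵥ ξhat - γ ⬝ᵥ a + η ⬝ᵥ b := by
  have : Fact (1 ≤ q) := ⟨ENNReal.HolderConjugate.one_le q p⟩
  calc ξ ⬝ᵥ v - lam * ‖toLp p (ξ - ξhat)‖
      = ξ ⬝ᵥ v - supportFun (dotProductBilin ℝ ℝ) (lpBall q lam) (ξ - ξhat) := by
        rw [supportFun_lpBall p q ((norm_nonneg _).trans hw)]
    _ ≤ ξhat ⬝ᵥ (v + γ - η) +
          supportFun (dotProductBilin ℝ ℝ).flip (Icc a b) (v - (v + γ - η)) :=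
        sub_supportFun_le continuous_dotProductBilin continuous_dotProductBilin_flip isCompact_Icc
          (isCompact_lpBall q lam) ξhat v hξ hw
    _ = (v + γ - η) ⬝ᵥ ξhat + supportFun (dotProductBilin ℝ ℝ).flip (Icc a b) (η - γ) := by
        rw [dotProduct_comm, show v - (v + γ - η) = η - γ by abel]
    _ ≤ (v + γ - η) ⬝ᵥ ξhat - γ ⬝ᵥ a + η ⬝ᵥ b := by
        linarith [supportFun_Icc_le (hξ.1.trans hξ.2) hγ hη]

lemma exists_dotProduct_sub_mul_norm_eq (p q : ℝ≥0∞) [p.HolderConjugate q] (hab : a ≤ b)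
    (hlam : 0 ≤ lam) (ξhat v : ι → ℝ) :
    ∃ ξ ∈ Icc a b, ∃ γ η : ι → ℝ, 0 ≤ γ ∧ 0 ≤ η ∧ ‖toLp q (v + γ - η)‖ ≤ lam ∧
      ξ ⬝ᵥ v - lam * ‖toLp p (ξ - ξhat)‖ = (v + γ - η) ⬝ᵥ ξhat - γ ⬝ᵥ a + η ⬝ᵥ b := by
  have : Fact (1 ≤ q) := ⟨ENNReal.HolderConjugate.one_le q p⟩
  have zero_mem : (0 : ι → ℝ) ∈ lpBall q lam := by simpa [lpBall] using hlam
  obtain ⟨ξ, hξ, w, hw, heq⟩ := exists_sub_supportFun_eq continuous_dotProductBilin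
    continuous_dotProductBilin_flip isCompact_Icc (convex_Icc a b) (nonempty_Icc.2 hab)
    (isCompact_lpBall q lam) (convex_lpBall q lam) ⟨0, zero_mem⟩ ξhat v
  have hsplit : v + (v - w)⁻ - (v - w)⁺ = w := by
    rw [add_sub_assoc, ← neg_sub (v - w)⁺, posPart_sub_negPart, neg_sub, add_sub_cancel]
  refine ⟨ξ, hξ, (v - w)⁻, (v - w)⁺, negPart_nonneg _, posPart_nonneg _, ?_⟩
  rw [hsplit]
  refine ⟨hw, ?_⟩
  rw [supportFun_lpBall p q hlam, supportFun_Icc hab, dotProductBilin_apply_apply,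
    dotProductBilin_apply_apply, dotProduct_comm ξhat] at heq
  rw [heq, sub_add_eq_add_sub, add_sub_assoc]

end Duality

theorem stmt8_general (p q : ℝ≥0∞) [p.HolderConjugate q] {a b : ι → ℝ} (hab : a ≤ b)
    (ξhat v : ι → ℝ) (t : ℝ) {lam : ℝ} (hlam : 0 ≤ lam) :
    ∃ m, IsGreatest {y : ℝ | ∃ ξ ∈ Icc a b, y = ξ ⬝ᵥ v - t - lam * ‖toLp p (ξ - ξhat)‖} m ∧
        IsLeast {y : ℝ | ∃ γ η : ι → ℝ, 0 ≤ γ ∧ 0 ≤ η ∧ ‖toLp q (v + γ - η)‖ ≤ lam ∧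
          y = (v + γ - η) ⬝ᵥ ξhat - γ ⬝ᵥ a + η ⬝ᵥ b - t} m := by
  obtain ⟨ξ, hξ, γ, η, hγ, hη, hw, heq⟩ := exists_dotProduct_sub_mul_norm_eq p q hab hlam ξhat v
  refine ⟨ξ ⬝ᵥ v - t - lam * ‖toLp p (ξ - ξhat)‖, ⟨⟨ξ, hξ, rfl⟩, ?_⟩,
    ⟨γ, η, hγ, hη, hw, by linarith⟩, ?_⟩
  · rintro _ ⟨x, hx, rfl⟩
    linarith [dotProduct_sub_mul_norm_le p q ξhat v hx hγ hη hw]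
  · rintro _ ⟨γ', η', hγ', hη', hw', rfl⟩
    linarith [dotProduct_sub_mul_norm_le p q ξhat v hξ hγ' hη' hw']

lemma lpNorm_eq_norm_toLp {n : ℕ} {p : ℝ≥0∞} (hp : p ≠ 0) (x : Fin n → ℝ) :
    lpNorm p x = ‖toLp p x‖ := by
  unfold _root_.lpNorm
  split_ifs with h
  · subst h
    exact (PiLp.norm_eq_ciSup (toLp ∞ x)).symm
  · exact (norm_toLp_eq_sum hp h x).symm

/-- for a box `[a,b]`, `ξ̂ ∈ [a,b]` and `λ ≥ 0`, the supremum over `ξ ∈ [a,b]`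
of `⟨ξ,v⟩ − t − λ‖ξ − ξ̂‖_p` equals the (attained) minimum of
`⟨v+γ−η, ξ̂⟩ − ⟨γ,a⟩ + ⟨η,b⟩ − t` over `γ, η ≥ 0` with `‖v+γ−η‖_q ≤ λ`. -/
theorem stmt8 (n : ℕ) (hn : 1 ≤ n) (p q : ℝ≥0∞) (hp : 1 ≤ p) (hpq : 1 / p + 1 / q = 1)
    (a b : Fin n → ℝ) (hab : ∀ i, a i ≤ b i)
    (ξhat : Fin n → ℝ) (hξ : ∀ i, a i ≤ ξhat i ∧ ξhat i ≤ b i)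
    (v : Fin n → ℝ) (t lam : ℝ) (hlam : 0 ≤ lam) :
    IsLeast {y : ℝ | ∃ γ η : Fin n → ℝ, (∀ i, 0 ≤ γ i) ∧ (∀ i, 0 ≤ η i) ∧
        lpNorm q (v + γ - η) ≤ lam ∧
        y = ip (v + γ - η) ξhat - ip γ a + ip η b - t}
      (sSup {y : ℝ | ∃ ξ : Fin n → ℝ, (∀ i, a i ≤ ξ i ∧ ξ i ≤ b i) ∧
        y = ip ξ v - t - lam * lpNorm p (ξ - ξhat)}) := by
  have : p.HolderConjugate q := ENNReal.holderConjugate_iff.2 (by simpa only [one_div] using hpq)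
  obtain ⟨m, hprimal, hdual⟩ := stmt8_general p q hab ξhat v t hlam
  simp only [lpNorm_eq_norm_toLp (ENNReal.HolderConjugate.ne_zero p q),
    lpNorm_eq_norm_toLp (ENNReal.HolderConjugate.ne_zero q p), forall_and]
  exact hprimal.csSup_eq ▸ hdual
end

section
/- (Corollary 2, reduction of the DR minimum cost flow problem) Let ĉ¹,…,ĉᴺ ∈ ℝⁿ (N ≥ 1) with empirical distribution F_N = (1/N)·Σ_{k=1}^N δ_{ĉᵏ}, let ε ≥ 0, and let X be any nonempty subset of { x ∈ ℝⁿ : x_i ≥ 0 for all i } (e.g., the set of feasible flows). Then inf over x ∈ X of sup{ ∫ ⟨c,x⟩ dμ(c) : μ a Borel probability measure on ℝⁿ with finite first moment and d_W^∞(F_N,μ) ≤ ε } equals inf over x ∈ X of Σ_{i=1}^n ( (1/N)·Σ_{k=1}^N ĉᵏ_i + ε )·x_i, and a point x ∈ X attains the first infimum if and only if it attains the second. -/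
open MeasureTheory Filter Topology
open scoped ENNReal BigOperators

/-- `h(v,t,ξ) = max(⟨ξ,v⟩ − t, 0)`. -/
noncomputable def hfun {n : ℕ} (v : Fin n → ℝ) (t : ℝ) (ξ : Fin n → ℝ) : ℝ :=
  max (ip ξ v - t) 0

/-- The empirical distribution `(1/N)·Σᵢ δ_{ξⁱ}` of `N` samples. -/
noncomputable def empirical {n : ℕ} (N : ℕ) (ξ : Fin N → Fin n → ℝ) :
    MeasureTheory.Measure (Fin n → ℝ) :=
  (N : ℝ≥0∞)⁻¹ • ∑ i, MeasureTheory.Measure.dirac (ξ i)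

/-- The Wasserstein distance (valued in `ℝ≥0∞`) between two Borel probability measures
on ℝⁿ, with ground metric `‖·‖_p`: the infimum over couplings `K` (probability measures on
ℝⁿ × ℝⁿ with the prescribed marginals) of `∫ ‖x − y‖_p dK(x,y)`. -/
noncomputable def dW {n : ℕ} (p : ℝ≥0∞) (μ ν : MeasureTheory.Measure (Fin n → ℝ)) : ℝ≥0∞ :=
  ⨅ (K : MeasureTheory.Measure ((Fin n → ℝ) × (Fin n → ℝ)))
    (_ : MeasureTheory.IsProbabilityMeasure K)
    (_ : K.map Prod.fst = μ) (_ : K.map Prod.snd = ν),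
    ∫⁻ z, ENNReal.ofReal (lpNorm p (z.1 - z.2)) ∂K

/-- The worst-case expected linear cost of a flow `x` over the `‖·‖_∞`-Wasserstein ball of
radius `ε` around the empirical distribution of the cost samples. -/
noncomputable def wcCost {n : ℕ} (N : ℕ) (c : Fin N → Fin n → ℝ) (ε : ℝ)
    (x : Fin n → ℝ) : ℝ :=
  sSup {r : ℝ | ∃ μ : MeasureTheory.Measure (Fin n → ℝ),
    MeasureTheory.IsProbabilityMeasure μ ∧
    MeasureTheory.Integrable (fun y => lpNorm ∞ y) μ ∧
    dW ∞ (empirical N c) μ ≤ ENNReal.ofReal ε ∧ r = ∫ y, ip y x ∂μ}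

/-!
By the dual pairing of `‖·‖_∞` and `‖·‖_1`, the functional `⟨·,x⟩` is `‖x‖_1`-Lipschitz, so passing
from `ν` to a measure at Wasserstein distance at most `ε` raises its integral by at most `ε‖x‖_1`.
Translating `ν` by `ε · sign x` costs at most `ε` and realises this increase, hence the worst-case
cost is `∫ ⟨·,x⟩ dν + ε‖x‖_1`; for `x ≥ 0` this is linear in `x`.
-/

theorem lpNorm_top_eq_norm {n : ℕ} (y : Fin n → ℝ) : lpNorm ∞ y = ‖y‖ := by
  rw [_root_.lpNorm, if_pos rfl, Pi.norm_def, Finset.sup_univ_eq_ciSup, NNReal.coe_iSup]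
  rfl

theorem lpNorm_neg {n : ℕ} (p : ℝ≥0∞) (y : Fin n → ℝ) : lpNorm p (-y) = lpNorm p y := by
  simp only [_root_.lpNorm, Pi.neg_apply, abs_neg]

theorem ip_eq_dotProduct {n : ℕ} (w x : Fin n → ℝ) : ip w x = w ⬝ᵥ x := rfl

theorem continuous_ip_left {n : ℕ} (x : Fin n → ℝ) : Continuous fun y => ip y x := by
  unfold ip
  fun_prop

theorem abs_ip_le_sum_abs_mul_lpNorm_top {n : ℕ} (y x : Fin n → ℝ) :
    |ip y x| ≤ (∑ i, |x i|) * lpNorm ∞ y := by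
  rw [lpNorm_top_eq_norm, Finset.sum_mul]
  refine (Finset.abs_sum_le_sum_abs _ _).trans (Finset.sum_le_sum fun i _ => ?_)
  rw [abs_mul, mul_comm]
  exact mul_le_mul_of_nonneg_left (norm_le_pi_norm y i) (abs_nonneg _)

theorem ip_sign_left {n : ℕ} (x : Fin n → ℝ) :
    ip (fun i => (SignType.sign (x i) : ℝ)) x = ∑ i, |x i| :=
  Finset.sum_congr rfl fun i _ => sign_mul_self (x i)

theorem lpNorm_top_smul_sign_le {n : ℕ} {ε : ℝ} (hε : 0 ≤ ε) (x : Fin n → ℝ) :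
    lpNorm ∞ (ε • fun i => (SignType.sign (x i) : ℝ)) ≤ ε := by
  rw [lpNorm_top_eq_norm, pi_norm_le_iff_of_nonneg hε]
  intro i
  have hsign : |(SignType.sign (x i) : ℝ)| ≤ 1 := by
    cases SignType.sign (x i) <;> simp
  simpa [abs_of_nonneg hε] using mul_le_of_le_one_right hε hsign

theorem integrable_ip_left {n : ℕ} {μ : Measure (Fin n → ℝ)}
    (hμ : Integrable (fun y => lpNorm ∞ y) μ) (x : Fin n → ℝ) :
    Integrable (fun y => ip y x) μ :=
  (hμ.const_mul _).mono' (continuous_ip_left x).aestronglyMeasurable <|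
    ae_of_all _ fun y => abs_ip_le_sum_abs_mul_lpNorm_top y x

theorem integrable_lpNorm_top_map_add_right {n : ℕ} {ν : Measure (Fin n → ℝ)}
    [IsFiniteMeasure ν] (hν : Integrable (fun y => lpNorm ∞ y) ν) (v : Fin n → ℝ) :
    Integrable (fun y => lpNorm ∞ y) (ν.map (· + v)) := by
  simp only [lpNorm_top_eq_norm] at hν ⊢
  rw [integrable_map_measure (by fun_prop) (by fun_prop)]
  refine (hν.add (integrable_const ‖v‖)).mono' (by fun_prop) (ae_of_all _ fun y => ?_)
  rw [Function.comp_apply, norm_norm]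
  exact norm_add_le y v

theorem ofReal_integral_le_lintegral_ofReal {α : Type*} [MeasurableSpace α] {μ : Measure α}
    {f : α → ℝ} (hf : Integrable f μ) :
    ENNReal.ofReal (∫ a, f a ∂μ) ≤ ∫⁻ a, ENNReal.ofReal (f a) ∂μ := by
  rw [integral_eq_lintegral_pos_part_sub_lintegral_neg_part hf]
  exact (ENNReal.ofReal_le_ofReal (sub_le_self _ ENNReal.toReal_nonneg)).trans
    ENNReal.ofReal_toReal_le

theorem ofReal_integral_snd_sub_integral_fst_le {α β : Type*} [MeasurableSpace α]
    [MeasurableSpace β] {K : Measure (α × β)} {f : α → ℝ} {g : β → ℝ}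
    (hf : Integrable f (K.map Prod.fst)) (hg : Integrable g (K.map Prod.snd)) :
    ENNReal.ofReal (∫ y, g y ∂K.map Prod.snd - ∫ y, f y ∂K.map Prod.fst) ≤
      ∫⁻ z, ENNReal.ofReal (g z.2 - f z.1) ∂K := by
  have hf' : Integrable (fun z => f z.1) K := hf.comp_measurable measurable_fst
  have hg' : Integrable (fun z => g z.2) K := hg.comp_measurable measurable_snd
  rw [integral_map measurable_fst.aemeasurable hf.aestronglyMeasurable,
    integral_map measurable_snd.aemeasurable hg.aestronglyMeasurable, ← integral_sub hg' hf']
  exact ofReal_integral_le_lintegral_ofReal (hg'.sub hf')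

section Wasserstein

variable {n : ℕ} {μ ν : Measure (Fin n → ℝ)} {p : ℝ≥0∞}

-- In the form `_ ≤ L * dW p ν μ` this fails when `L = 0` and `ν`, `μ` have no coupling, since
-- `0 * ∞ = 0`.
theorem ofReal_integral_sub_div_le_dW {f : (Fin n → ℝ) → ℝ} {L : NNReal}
    (hf : ∀ y z, f z - f y ≤ L * lpNorm p (y - z)) (hν : Integrable f ν) (hμ : Integrable f μ) :
    ENNReal.ofReal (∫ y, f y ∂μ - ∫ y, f y ∂ν) / L ≤ dW p ν μ := by
  refine le_iInf fun K => le_iInf fun _ => le_iInf fun hfst => le_iInf fun hsnd => ?_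
  subst hfst hsnd
  refine ENNReal.div_le_of_le_mul' ?_
  calc ENNReal.ofReal (∫ y, f y ∂K.map Prod.snd - ∫ y, f y ∂K.map Prod.fst)
      ≤ ∫⁻ z, ENNReal.ofReal (f z.2 - f z.1) ∂K :=
        ofReal_integral_snd_sub_integral_fst_le hν hμ
    _ ≤ ∫⁻ z, L * ENNReal.ofReal (lpNorm p (z.1 - z.2)) ∂K := by
        refine lintegral_mono fun z => ?_
        rw [← ENNReal.ofReal_coe_nnreal, ← ENNReal.ofReal_mul L.coe_nonneg]
        exact ENNReal.ofReal_le_ofReal (hf z.1 z.2)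
    _ = L * ∫⁻ z, ENNReal.ofReal (lpNorm p (z.1 - z.2)) ∂K :=
        lintegral_const_mul' _ _ ENNReal.coe_ne_top

theorem integral_le_add_of_dW_le {f : (Fin n → ℝ) → ℝ} {L : NNReal} {ε : ℝ} (hε : 0 ≤ ε)
    (hf : ∀ y z, f z - f y ≤ L * lpNorm p (y - z)) (hν : Integrable f ν) (hμ : Integrable f μ)
    (hd : dW p ν μ ≤ ENNReal.ofReal ε) :
    ∫ y, f y ∂μ ≤ ∫ y, f y ∂ν + ε * L := by
  have hdiv := (ofReal_integral_sub_div_le_dW hf hν hμ).trans hd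
  rw [ENNReal.div_le_iff_le_mul (.inr ENNReal.ofReal_ne_top) (.inl ENNReal.coe_ne_top),
    ← ENNReal.ofReal_coe_nnreal, ← ENNReal.ofReal_mul hε,
    ENNReal.ofReal_le_ofReal_iff (mul_nonneg hε L.coe_nonneg)] at hdiv
  linarith

theorem dW_map_add_right_le (p : ℝ≥0∞) (ν : Measure (Fin n → ℝ)) [IsProbabilityMeasure ν]
    (v : Fin n → ℝ) : dW p ν (ν.map (· + v)) ≤ ENNReal.ofReal (lpNorm p v) := by
  have hgraph : Measurable fun y : Fin n → ℝ => (y, y + v) := by fun_prop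
  refine iInf₂_le_of_le (ν.map fun y => (y, y + v))
    (Measure.isProbabilityMeasure_map hgraph.aemeasurable) (iInf₂_le_of_le ?_ ?_ ?_)
  · rw [Measure.map_map measurable_fst hgraph]
    exact Measure.map_id
  · exact Measure.map_map measurable_snd hgraph
  · refine (lintegral_map_le _ _).trans ?_
    simp only [sub_add_cancel_left, lpNorm_neg, lintegral_const, measure_univ, mul_one, le_refl]

theorem integral_ip_map_add_right [IsProbabilityMeasure ν]
    (hν : Integrable (fun y => lpNorm ∞ y) ν) (v x : Fin n → ℝ) :
    ∫ y, ip y x ∂ν.map (· + v) = ∫ y, ip y x ∂ν + ip v x := by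
  rw [integral_map (by fun_prop) (continuous_ip_left x).aestronglyMeasurable]
  have hν' := integrable_ip_left hν x
  simp only [ip_eq_dotProduct, add_dotProduct] at hν' ⊢
  rw [integral_add hν' (integrable_const _), integral_const, probReal_univ, one_smul]

theorem isGreatest_integral_ip_dW_top_ball [IsProbabilityMeasure ν]
    (hν : Integrable (fun y => lpNorm ∞ y) ν) {ε : ℝ} (hε : 0 ≤ ε) (x : Fin n → ℝ) :
    IsGreatest {r : ℝ | ∃ μ : Measure (Fin n → ℝ), IsProbabilityMeasure μ ∧
        Integrable (fun y => lpNorm ∞ y) μ ∧ dW ∞ ν μ ≤ ENNReal.ofReal ε ∧ r = ∫ y, ip y x ∂μ}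
      (∫ y, ip y x ∂ν + ε * ∑ i, |x i|) := by
  constructor
  · let v : Fin n → ℝ := ε • fun i => (SignType.sign (x i) : ℝ)
    have hball : dW ∞ ν (ν.map (· + v)) ≤ ENNReal.ofReal ε :=
      (dW_map_add_right_le ∞ ν v).trans
        (ENNReal.ofReal_le_ofReal (lpNorm_top_smul_sign_le hε x))
    have hvx : ip v x = ε * ∑ i, |x i| := by
      rw [← ip_sign_left, ip_eq_dotProduct, smul_dotProduct, smul_eq_mul, ip_eq_dotProduct]
    exact ⟨ν.map (· + v), Measure.isProbabilityMeasure_map (by fun_prop),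
      integrable_lpNorm_top_map_add_right hν v, hball,
      by rw [integral_ip_map_add_right hν, hvx]⟩
  · rintro _ ⟨μ, -, hμ, hd, rfl⟩
    let L : NNReal := ⟨∑ i, |x i|, Finset.sum_nonneg fun i _ => abs_nonneg (x i)⟩
    have hlip (y z : Fin n → ℝ) : ip z x - ip y x ≤ L * lpNorm ∞ (y - z) := by
      rw [ip_eq_dotProduct, ip_eq_dotProduct, ← sub_dotProduct, ← neg_sub y z, ← lpNorm_neg]
      exact (le_abs_self _).trans (abs_ip_le_sum_abs_mul_lpNorm_top _ x)
    exact integral_le_add_of_dW_le hε hlip (integrable_ip_left hν x) (integrable_ip_left hμ x) hd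

end Wasserstein

section Empirical

variable {n N : ℕ} (ξ : Fin N → Fin n → ℝ)

instance isProbabilityMeasure_empirical [NeZero N] : IsProbabilityMeasure (empirical N ξ) where
  measure_univ := by
    simp [empirical, ENNReal.inv_mul_cancel (NeZero.ne (N : ℝ≥0∞))]

variable {E : Type*} [NormedAddCommGroup E]

theorem integrable_empirical [NeZero N] (f : (Fin n → ℝ) → E) :
    Integrable f (empirical N ξ) :=
  (integrable_finsetSum_measure.2 fun _ _ => integrable_dirac enorm_lt_top).smul_measure
    (ENNReal.inv_ne_top.2 (NeZero.ne _))

theorem integral_empirical [NormedSpace ℝ E] [CompleteSpace E] (f : (Fin n → ℝ) → E) :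
    ∫ y, f y ∂empirical N ξ = (N : ℝ)⁻¹ • ∑ k, f (ξ k) := by
  rw [empirical, integral_smul_measure,
    integral_finsetSum_measure fun _ _ => integrable_dirac enorm_lt_top]
  simp only [integral_dirac, ENNReal.toReal_inv, ENNReal.toReal_natCast]

theorem integral_ip_empirical (x : Fin n → ℝ) :
    ∫ y, ip y x ∂empirical N ξ = ∑ i, ((1 / (N : ℝ)) * ∑ k, ξ k i) * x i := by
  simp only [integral_empirical, ip, smul_eq_mul, one_div, mul_assoc, Finset.sum_mul,
    ← Finset.mul_sum]
  rw [Finset.sum_comm]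

end Empirical

theorem stmt16_general {n N : ℕ} [NeZero N] (c : Fin N → Fin n → ℝ) {ε : ℝ} (hε : 0 ≤ ε)
    (x : Fin n → ℝ) :
    wcCost N c ε x = ∑ i, (((1 / (N : ℝ)) * ∑ k, c k i) * x i + ε * |x i|) := by
  rw [Finset.sum_add_distrib, ← Finset.mul_sum, ← integral_ip_empirical]
  exact (isGreatest_integral_ip_dW_top_ball (integrable_empirical c _) hε x).csSup_eq

/-- Corollary 2, reduction of the DR minimum cost flow problem: over any
nonempty set `X` of nonnegative flows, the DR problem `inf_{x∈X} sup{∫⟨c,x⟩dμ : d_W^∞ ≤ ε}`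
has the same optimal value as `inf_{x∈X} Σᵢ((1/N)Σₖ ĉᵏᵢ + ε)xᵢ`, with the same minimizers. -/
theorem stmt16 (n : ℕ) (hn : 1 ≤ n)
    (N : ℕ) (hN : 1 ≤ N) (c : Fin N → Fin n → ℝ) (ε : ℝ) (hε : 0 ≤ ε)
    (X : Set (Fin n → ℝ)) (hXne : X.Nonempty) (hX : ∀ x ∈ X, ∀ i, 0 ≤ x i) :
    sInf (wcCost N c ε '' X) =
      sInf ((fun x : Fin n → ℝ => ∑ i, ((1 / (N : ℝ)) * ∑ k, c k i + ε) * x i) '' X) ∧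
    ∀ x ∈ X, (wcCost N c ε x = sInf (wcCost N c ε '' X) ↔
      (∑ i, ((1 / (N : ℝ)) * ∑ k, c k i + ε) * x i) =
        sInf ((fun x : Fin n → ℝ => ∑ i, ((1 / (N : ℝ)) * ∑ k, c k i + ε) * x i) '' X)) := by
  have : NeZero N := ⟨Nat.one_le_iff_ne_zero.1 hN⟩
  have hcost : Set.EqOn (wcCost N c ε)
      (fun x => ∑ i, ((1 / (N : ℝ)) * ∑ k, c k i + ε) * x i) X := fun x hx => by
    simp only [stmt16_general c hε, abs_of_nonneg (hX x hx _), add_mul]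
  rw [hcost.image_eq]
  exact ⟨rfl, fun x hx => by rw [hcost hx]⟩
end
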